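/- arXiv:0812.3415 — 2 statements merged into one kernel-verified Lean document; each statement's English description precedes it below -/
import Mathlib

section
/- Fix real numbers λ₁ > λ₂ > λ₃ > λ₄ with λᵢ+λⱼ > 0 for all i ≠ j and λ₁²+λ₄² ≠ λ₂²+λ₃², and let α₁ < α₂ be the two roots of f̃(t) = (λ₁²−λ₄²)²t² − 2[(λ₁²−λ₂²)(λ₃²−λ₄²) + (λ₁²−λ₃²)(λ₂²−λ₄²)]t + (λ₂²−λ₃²)². Let a, b be real with a > 0 and α₂ < b²/a² < 1, and let q = (b,0,0,a,0,0) ∈ ℝ⁶ (the equilibrium M¹_{b,a}). Then the Jacobian DG(q) has complex eigenvalues 0 (multiplicity 2) together with four distinct nonzero purely imaginary numbers iA, −iA, iB, −iB with A ≠ B, A, B > 0; i.e. M¹_{b,a} is a stable equilibrium of center-center type. -/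
/-!
Write `Lᵢ = lᵢ²`. At `q = (b,0,0,a,0,0)` the rows `0` and `3` of the Jacobian vanish and the
remaining four coordinates split into `u = (x₂,y₂)` and `v = (x₃,y₃)` with `u' = P v`, `v' = Q u`.
The characteristic polynomial is therefore `X² (X⁴ + T X² + D)` with `T = -tr (PQ)` and
`D = det P · det Q` (`charpoly_sparse`). Up to positive factors, with `t = b²/a²`,
`T = c t - d` and `D = K (1 - t)²`, where `c, d, K > 0` are polynomials in the `Lᵢ`, and
`(c t - d)² - 4 K (1 - t)² = (L₁ + L₄ - L₂ - L₃)² f̃(t)`.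

For `t > α₂` the right-hand side is positive, so `X⁴ + T X² + D` has two distinct real roots in
`X²`. They are both negative because `D > 0` and `T > 0`. For the latter, the identity at
`t₀ = d / c < 1` gives `f̃(t₀) < 0`, so `t₀ < α₂ < t`.
-/

open Polynomial

/-- The Hamiltonian vector field `G` of the integral `I` of the SO(4) free
rigid body with respect to the minus Lie–Poisson structure, in coordinates
`(x₁,x₂,x₃,y₁,y₂,y₃) = (p 0, p 1, p 2, p 3, p 4, p 5)`. -/
noncomputable def rbG (l1 l2 l3 l4 : ℝ) (p : Fin 6 → ℝ) : Fin 6 → ℝ :=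
  ![2*(l2^2-l3^2) * (p 1 * p 2 - p 4 * p 5),
    2*(l3^2-l1^2) * (p 2 * p 0 - p 5 * p 3),
    2*(l1^2-l2^2) * (p 0 * p 1 - p 3 * p 4),
    2*(l4^2-l1^2) * (p 1 * p 5 - p 2 * p 4),
    2*(l4^2-l2^2) * (p 2 * p 3 - p 0 * p 5),
    2*(l4^2-l3^2) * (p 0 * p 4 - p 1 * p 3)]

/-- The Jacobian matrix of `G` at a point `p`. -/
noncomputable def JacG (l1 l2 l3 l4 : ℝ) (p : Fin 6 → ℝ) :
    Matrix (Fin 6) (Fin 6) ℝ :=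
  Matrix.of fun i j => fderiv ℝ (fun q => rbG l1 l2 l3 l4 q i) p (Pi.single j 1)

/-- The quadratic `f̃(t) = S̃₂t² + T̃₂t + Ũ₂` controlling the bifurcations of
the `t₁`-equilibria `M¹_{b,a}`. -/
noncomputable def ftilde (l1 l2 l3 l4 t : ℝ) : ℝ :=
  (l1^2-l4^2)^2 * t^2 -
    2*((l1^2-l2^2)*(l3^2-l4^2) + (l1^2-l3^2)*(l2^2-l4^2)) * t + (l2^2-l3^2)^2

/-- Directional derivative of the quadratic forms that make up the components of `rbG`. -/
lemma fderiv_quad (c : ℝ) (i j k l : Fin 6) (p v : Fin 6 → ℝ) :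
    fderiv ℝ (fun q : Fin 6 → ℝ => c * (q i * q j - q k * q l)) p v =
      c * (p i * v j + p j * v i - (p k * v l + p l * v k)) := by
  have hi : ∀ i : Fin 6, HasFDerivAt (fun q : Fin 6 → ℝ => q i)
      (ContinuousLinearMap.proj (R := ℝ) (φ := fun _ : Fin 6 => ℝ) i) p :=
    fun i => hasFDerivAt_apply i p
  have h := (((hi i).mul (hi j)).sub ((hi k).mul (hi l))).const_mul c
  have h' : fderiv ℝ (fun q : Fin 6 → ℝ => c * (q i * q j - q k * q l)) p = _ := h.fderiv
  rw [h']
  simp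

lemma jac_eq (l1 l2 l3 l4 a b : ℝ) :
    JacG l1 l2 l3 l4 ![b, 0, 0, a, 0, 0] =
      !![0, 0, 0, 0, 0, 0;
         0, 0, 2*(l3^2-l1^2)*b, 0, 0, -(2*(l3^2-l1^2)*a);
         0, 2*(l1^2-l2^2)*b, 0, 0, -(2*(l1^2-l2^2)*a), 0;
         0, 0, 0, 0, 0, 0;
         0, 0, 2*(l4^2-l2^2)*a, 0, 0, -(2*(l4^2-l2^2)*b);
         0, -(2*(l4^2-l3^2)*a), 0, 0, 2*(l4^2-l3^2)*b, 0] := by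
  ext i j
  fin_cases i <;> simp only [JacG, rbG, Matrix.of_apply] <;>
    simp [fderiv_quad] <;> fin_cases j <;> simp

/-- Characteristic polynomial of a matrix with the sparsity pattern of the Jacobian. -/
lemma charpoly_sparse {R : Type*} [CommRing R] (p q r s t u v w : R) :
    (!![0, 0, 0, 0, 0, 0;
        0, 0, p, 0, 0, q;
        0, t, 0, 0, u, 0;
        0, 0, 0, 0, 0, 0;
        0, 0, r, 0, 0, s;
        0, v, 0, 0, w, 0] : Matrix (Fin 6) (Fin 6) R).charpoly =
      X^2 * (X^4 + C (-(p*t + q*v + r*u + s*w)) * X^2 + C ((p*s - q*r) * (t*w - u*v))) := by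
  have hcm : (!![0, 0, 0, 0, 0, 0;
        0, 0, p, 0, 0, q;
        0, t, 0, 0, u, 0;
        0, 0, 0, 0, 0, 0;
        0, 0, r, 0, 0, s;
        0, v, 0, 0, w, 0] : Matrix (Fin 6) (Fin 6) R).charmatrix =
      !![X, 0, 0, 0, 0, 0;
         0, X, -C p, 0, 0, -C q;
         0, -C t, X, 0, -C u, 0;
         0, 0, 0, X, 0, 0;
         0, 0, -C r, 0, X, -C s;
         0, -C v, 0, 0, -C w, X] := by
    ext1 i j
    fin_cases i <;> fin_cases j <;> simp
  rw [Matrix.charpoly, hcm]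
  rw [Matrix.det_succ_row_zero]
  simp [Fin.sum_univ_succ, Matrix.submatrix, Fin.succAbove]
  -- Row `2` of the remaining `5 × 5` matrix is the other row with only a diagonal entry.
  rw [Matrix.det_succ_row _ 2]
  simp [Fin.sum_univ_succ]
  rw [Matrix.det_succ_row_zero]
  simp [Fin.sum_univ_succ, Matrix.det_fin_three, Fin.succAbove]
  ring

/-- A quadratic `Y² + T Y + D` with positive coefficients and positive discriminant has roots
`-A²`, `-B²` with distinct `A, B > 0`. -/
lemma exists_freq (T D : ℝ) (hT : 0 < T) (hD : 0 < D) (hdisc : 0 < T^2 - 4*D) :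
    ∃ A B : ℝ, 0 < A ∧ 0 < B ∧ A ≠ B ∧ A^2 + B^2 = T ∧ A^2 * B^2 = D := by
  have hs : 0 < √(T^2 - 4*D) := Real.sqrt_pos.2 hdisc
  have hs2 : √(T^2 - 4*D)^2 = T^2 - 4*D := Real.sq_sqrt hdisc.le
  set s := √(T^2 - 4*D)
  have hsT : s < T := by nlinarith
  have hA : √((T + s)/2)^2 = (T + s)/2 := Real.sq_sqrt (by linarith)
  have hB : √((T - s)/2)^2 = (T - s)/2 := Real.sq_sqrt (by linarith)
  refine ⟨√((T + s)/2), √((T - s)/2), Real.sqrt_pos.2 (by linarith),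
    Real.sqrt_pos.2 (by linarith), ?_, ?_, ?_⟩
  · intro h
    rw [h] at hA
    linarith
  · rw [hA, hB]; ring
  · rw [hA, hB]; nlinarith

/-- if `α₂ < b²/a² < 1` (with `α₁ < α₂` the roots of `f̃`), the
Jacobian of `G` at `M¹_{b,a} = (b,0,0,a,0,0)` has eigenvalues `0`
(multiplicity 2) and four distinct nonzero purely imaginary numbers
`±iA, ±iB`, `A ≠ B`, `A, B > 0` (center-center spectrum). -/
theorem stmt15 (l1 l2 l3 l4 : ℝ)
    (h12 : l2 < l1) (h23 : l3 < l2) (h34 : l4 < l3)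
    (hp12 : 0 < l1 + l2) (hp13 : 0 < l1 + l3) (hp14 : 0 < l1 + l4)
    (hp23 : 0 < l2 + l3) (hp24 : 0 < l2 + l4) (hp34 : 0 < l3 + l4)
    (hgen : l1^2 + l4^2 ≠ l2^2 + l3^2)
    (α₁ α₂ : ℝ) (hroot : α₁ < α₂)
    (hα₁ : ftilde l1 l2 l3 l4 α₁ = 0) (hα₂ : ftilde l1 l2 l3 l4 α₂ = 0)
    (a b : ℝ) (ha : 0 < a) (hr1 : α₂ < b^2 / a^2) (hr2 : b^2 / a^2 < 1) :
    ∃ A B : ℝ, 0 < A ∧ 0 < B ∧ A ≠ B ∧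
      ((JacG l1 l2 l3 l4 ![b, 0, 0, a, 0, 0]).map Complex.ofReal).charpoly =
        X^2 * (X - C ((A : ℂ) * Complex.I)) * (X + C ((A : ℂ) * Complex.I)) *
          (X - C ((B : ℂ) * Complex.I)) * (X + C ((B : ℂ) * Complex.I)) := by
  have e12 : 0 < l1^2 - l2^2 := by nlinarith
  have e23 : 0 < l2^2 - l3^2 := by nlinarith
  have e34 : 0 < l3^2 - l4^2 := by nlinarith
  have e13 : 0 < l1^2 - l3^2 := by linarith
  have e24 : 0 < l2^2 - l4^2 := by linarith
  have e14 : 0 < l1^2 - l4^2 := by linarith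
  obtain ⟨t, ht⟩ : ∃ t, t = b^2 / a^2 := ⟨_, rfl⟩
  rw [← ht] at hr1 hr2
  have hb : b^2 = t * a^2 := by rw [ht]; field_simp
  -- Vieta: `f̃` is its leading coefficient times `(x - α₁)(x - α₂)`.
  have hfac : ∀ x, ftilde l1 l2 l3 l4 x = (l1^2-l4^2)^2 * ((x - α₁) * (x - α₂)) := by
    intro x
    have h : (α₁ - α₂) * (ftilde l1 l2 l3 l4 x - (l1^2-l4^2)^2 * ((x - α₁) * (x - α₂))) = 0 := by
      unfold ftilde at *
      linear_combination (x - α₂) * hα₁ - (x - α₁) * hα₂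
    rcases mul_eq_zero.1 h with h | h <;> linarith
  obtain ⟨c, hc⟩ : ∃ c, c = (l1^2-l3^2)*(l1^2-l2^2) + (l2^2-l4^2)*(l3^2-l4^2) := ⟨_, rfl⟩
  obtain ⟨d, hd⟩ : ∃ d, d = (l1^2-l3^2)*(l3^2-l4^2) + (l2^2-l4^2)*(l1^2-l2^2) := ⟨_, rfl⟩
  obtain ⟨K, hK⟩ : ∃ K, K = (l1^2-l2^2)*(l1^2-l3^2)*(l2^2-l4^2)*(l3^2-l4^2) := ⟨_, rfl⟩
  have hcpos : 0 < c := by rw [hc]; positivity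
  have hKpos : 0 < K := by rw [hK]; positivity
  have hδ : 0 < (l1^2+l4^2-l2^2-l3^2)^2 := by
    have h : l1^2+l4^2-l2^2-l3^2 ≠ 0 := fun h => hgen (by linarith)
    positivity
  have hdc : c - d = (l1^2+l4^2-l2^2-l3^2)^2 := by rw [hc, hd]; ring
  have hid : ∀ x, (c*x - d)^2 - 4*K*(1 - x)^2 =
      (l1^2+l4^2-l2^2-l3^2)^2 * ftilde l1 l2 l3 l4 x := by
    intro x; rw [hc, hd, hK]; unfold ftilde; ring
  have hft : 0 < ftilde l1 l2 l3 l4 t := by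
    rw [hfac]
    exact mul_pos (by positivity) (mul_pos (by linarith) (by linarith))
  have hT : 0 < c*t - d := by
    by_contra! hneg
    have h0 : c * (d / c) = d := by field_simp
    have hlt : t ≤ d / c := by rw [le_div_iff₀ hcpos]; linarith
    have h1 : d / c < 1 := by rw [div_lt_one hcpos]; linarith
    have h2 : 0 ≤ ftilde l1 l2 l3 l4 (d / c) := by
      rw [hfac]
      exact mul_nonneg (by positivity) (mul_nonneg (by linarith) (by linarith))
    have h3 := hid (d / c)
    rw [h0] at h3
    have h4 : 0 < 4*K*(1 - d / c)^2 := mul_pos (by linarith) (pow_pos (by linarith) 2)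
    nlinarith [mul_nonneg hδ.le h2]
  obtain ⟨A, B, hA, hB, hAB, hsum, hprod⟩ := exists_freq (4*a^2*(c*t - d))
    (16*a^4*(K*(1 - t)^2)) (by positivity)
    (mul_pos (by positivity) (mul_pos hKpos (pow_pos (by linarith) 2)))
    (by
      have h := hid t
      have h' : (4*a^2*(c*t - d))^2 - 4*(16*a^4*(K*(1 - t)^2)) =
          16*a^4*((l1^2+l4^2-l2^2-l3^2)^2 * ftilde l1 l2 l3 l4 t) := by
        rw [← h]; ring
      rw [h']; positivity)
  refine ⟨A, B, hA, hB, hAB, ?_⟩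
  rw [show (JacG l1 l2 l3 l4 ![b, 0, 0, a, 0, 0]).map Complex.ofReal =
    (JacG l1 l2 l3 l4 ![b, 0, 0, a, 0, 0]).map Complex.ofRealHom from rfl,
    Matrix.charpoly_map, jac_eq, charpoly_sparse]
  have hT' : -(2*(l3^2-l1^2)*b * (2*(l1^2-l2^2)*b)
      + -(2*(l3^2-l1^2)*a) * -(2*(l4^2-l3^2)*a)
      + 2*(l4^2-l2^2)*a * -(2*(l1^2-l2^2)*a)
      + -(2*(l4^2-l2^2)*b) * (2*(l4^2-l3^2)*b)) = A^2 + B^2 := by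
    rw [hsum, hc, hd]
    linear_combination 4*((l1^2-l3^2)*(l1^2-l2^2) + (l2^2-l4^2)*(l3^2-l4^2)) * hb
  have hD' : (2*(l3^2-l1^2)*b * -(2*(l4^2-l2^2)*b) - -(2*(l3^2-l1^2)*a) * (2*(l4^2-l2^2)*a)) *
      (2*(l1^2-l2^2)*b * (2*(l4^2-l3^2)*b) - -(2*(l1^2-l2^2)*a) * -(2*(l4^2-l3^2)*a))
      = A^2 * B^2 := by
    have h : a^4*(1 - t)^2 = (a^2 - b^2)^2 := by rw [hb]; ring
    rw [hprod, hK]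
    linear_combination -16*((l1^2-l2^2)*(l1^2-l3^2)*(l2^2-l4^2)*(l3^2-l4^2)) * h
  rw [hT', hD']
  have hI : (C Complex.I : ℂ[X])^2 = -1 := by
    rw [← C_pow, Complex.I_sq]; simp
  have hfactor : ∀ z : ℝ, (X - C ((z : ℂ) * Complex.I)) * (X + C ((z : ℂ) * Complex.I)) =
      X^2 + C (z : ℂ)^2 := by
    intro z
    rw [C_mul]
    linear_combination -(C (z : ℂ))^2 * hI
  calc _ = X^2 * ((X^2 + C (A : ℂ)^2) * (X^2 + C (B : ℂ)^2)) := by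
        simp
        ring
    _ = _ := by rw [← hfactor A, ← hfactor B]; ring
end

section
/- Fix real numbers λ₁ > λ₂ > λ₃ > λ₄ with λᵢ+λⱼ > 0 for all i ≠ j. Let a, b be real numbers with a² ≠ b², and let p = (0,0,a,0,0,b) ∈ ℝ⁶ (an equilibrium M³_{a,b} in the Cartan subalgebra t₃). Then the Jacobian DG(p) has complex eigenvalues 0 (multiplicity 2) together with four distinct nonzero purely imaginary numbers iA, −iA, iB, −iB with A ≠ B, A, B > 0; i.e. every equilibrium of the Weyl group orbit in t₃ is non-degenerate of center-center type, hence nonlinearly stable. -/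
/-!
Write `α = 2(λ₂²-λ₃²) > 0` and `β = 2(λ₃²-λ₁²)`, `γ = 2(λ₄²-λ₁²)`, `δ = 2(λ₄²-λ₂²)`, all negative.
The linearisation of `G` at `(0,0,a,0,0,b)` kills the directions `x₃, y₃` and exchanges the planes
`(x₁,y₁)` and `(x₂,y₂)`, so its characteristic polynomial is `X² (X⁴ + S X² + D)` with
`S = a²(γδ-αβ) + b²(βγ-αδ) > 0` and `D = -αβγδ(a²-b²)² > 0` (`charpoly_sparse`).
The discriminant is
`S² - 4D = a⁴(αβ+γδ)² + b⁴(αδ+βγ)² + a²b²(2(γδ-αβ)(βγ-αδ) - 8αβγδ)`,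
which is positive because `αβ+γδ` and `αδ+βγ` are positive by the ordering `λ₁² > λ₂² > λ₃² > λ₄²`.
Hence `X⁴ + S X² + D = (X² + A²)(X² + B²)` with distinct `A, B > 0` (`exists_frequencies`).
-/

open Polynomial

/-- The matrix of the linearisation at `(0,0,a,0,0,b)`, with `α, β, γ, δ` the coefficients of the
first, second, fourth and fifth components of the vector field. -/
def sparseJac {R : Type*} [Ring R] (α β γ δ a b : R) : Matrix (Fin 6) (Fin 6) R :=
  !![0, α * a, 0, 0, -(α * b), 0;
     β * a, 0, 0, -(β * b), 0, 0;
     0, 0, 0, 0, 0, 0;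
     0, γ * b, 0, 0, -(γ * a), 0;
     -(δ * b), 0, 0, δ * a, 0, 0;
     0, 0, 0, 0, 0, 0]

lemma JacG_eq (l1 l2 l3 l4 a b : ℝ) :
    JacG l1 l2 l3 l4 ![0, 0, a, 0, 0, b] =
      sparseJac (2*(l2^2-l3^2)) (2*(l3^2-l1^2)) (2*(l4^2-l1^2)) (2*(l4^2-l2^2)) a b := by
  -- every component of the field has the form `c * (qᵢ qⱼ - qₖ qₘ)`
  have key : ∀ (c : ℝ) (i j k m : Fin 6) (p v : Fin 6 → ℝ),
      fderiv ℝ (fun q : Fin 6 → ℝ => c * (q i * q j - q k * q m)) p v =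
        c * (p i * v j + p j * v i - (p k * v m + p m * v k)) := by
    intro c i j k m p v
    have hc : ∀ n : Fin 6, HasFDerivAt (fun q : Fin 6 → ℝ => q n)
        (ContinuousLinearMap.proj (R := ℝ) (φ := fun _ : Fin 6 => ℝ) n) p :=
      fun n => hasFDerivAt_apply n p
    have h := ((((hc i).mul (hc j)).sub ((hc k).mul (hc m))).const_mul c).fderiv
    have h' := congrArg (fun L => L v) h
    simpa using h'
  ext i j
  fin_cases i <;> simp only [JacG, rbG, Matrix.of_apply, Fin.zero_eta, Fin.mk_one, Fin.reduceFinMk,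
      Matrix.cons_val, key] <;>
    fin_cases j <;> simp [sparseJac]

lemma charpoly_sparse_s17 {R : Type*} [CommRing R] (α β γ δ a b : R) :
    (sparseJac α β γ δ a b).charpoly =
      X^2 * (X^4 + C (a^2 * (γ*δ - α*β) + b^2 * (β*γ - α*δ)) * X^2
        + C (-(α*β*γ*δ) * (a^2 - b^2)^2)) := by
  have hM : (sparseJac α β γ δ a b).charmatrix =
      !![X, -(C α * C a), 0, 0, C α * C b, 0;
         -(C β * C a), X, 0, C β * C b, 0, 0;
         0, 0, X, 0, 0, 0;
         0, -(C γ * C b), 0, X, C γ * C a, 0;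
         C δ * C b, 0, 0, -(C δ * C a), X, 0;
         0, 0, 0, 0, 0, X] := by
    ext1 i j
    fin_cases i <;> fin_cases j <;> simp [sparseJac, Matrix.charmatrix_apply]
  rw [Matrix.charpoly, hM]
  simp [Matrix.det_succ_row_zero, Fin.sum_univ_succ, Fin.succAbove]
  ring

/-- `X⁴ + S X² + D` with `S, D > 0` and positive discriminant has two distinct pairs of
opposite imaginary roots. -/
lemma exists_frequencies (S D : ℝ) (hS : 0 < S) (hD : 0 < D) (hdisc : 0 < S^2 - 4*D) :
    ∃ A B : ℝ, 0 < A ∧ 0 < B ∧ A ≠ B ∧ A^2 + B^2 = S ∧ A^2 * B^2 = D := by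
  set r := √(S^2 - 4*D) with hr
  have hr0 : 0 < r := Real.sqrt_pos.mpr hdisc
  have hr2 : r^2 = S^2 - 4*D := Real.sq_sqrt hdisc.le
  have hrS : r < S := by nlinarith
  have hA : 0 < (S + r)/2 := by linarith
  have hB : 0 < (S - r)/2 := by linarith
  refine ⟨√((S + r)/2), √((S - r)/2), Real.sqrt_pos.mpr hA, Real.sqrt_pos.mpr hB, ?_, ?_, ?_⟩
  · intro h
    rw [Real.sqrt_inj hA.le hB.le] at h
    linarith
  · rw [Real.sq_sqrt hA.le, Real.sq_sqrt hB.le]; ring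
  · rw [Real.sq_sqrt hA.le, Real.sq_sqrt hB.le]; linarith

/-- at the equilibrium `M³_{a,b} = (0,0,a,0,0,b)` in `t₃` with
`a² ≠ b²`, the Jacobian of `G` has eigenvalues `0` (multiplicity 2) and four
distinct nonzero purely imaginary numbers `±iA, ±iB`, `A ≠ B`, `A, B > 0`
(center-center spectrum, hence nonlinear stability). -/
theorem stmt17 (l1 l2 l3 l4 : ℝ)
    (h12 : l2 < l1) (h23 : l3 < l2) (h34 : l4 < l3)
    (hp12 : 0 < l1 + l2) (hp13 : 0 < l1 + l3) (hp14 : 0 < l1 + l4)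
    (hp23 : 0 < l2 + l3) (hp24 : 0 < l2 + l4) (hp34 : 0 < l3 + l4)
    (a b : ℝ) (hab : a^2 ≠ b^2) :
    ∃ A B : ℝ, 0 < A ∧ 0 < B ∧ A ≠ B ∧
      ((JacG l1 l2 l3 l4 ![0, 0, a, 0, 0, b]).map Complex.ofReal).charpoly =
        X^2 * (X - C ((A : ℂ) * Complex.I)) * (X + C ((A : ℂ) * Complex.I)) *
          (X - C ((B : ℂ) * Complex.I)) * (X + C ((B : ℂ) * Complex.I)) := by
  have q12 : 0 < l1^2 - l2^2 := by nlinarith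
  have q23 : 0 < l2^2 - l3^2 := by nlinarith
  have q34 : 0 < l3^2 - l4^2 := by nlinarith
  set α := 2*(l2^2-l3^2) with hα
  set β := 2*(l3^2-l1^2) with hβ
  set γ := 2*(l4^2-l1^2) with hγ
  set δ := 2*(l4^2-l2^2) with hδ
  have α0 : 0 < α := by linarith
  have β0 : β < 0 := by linarith
  have γ0 : γ < 0 := by linarith
  have δ0 : δ < 0 := by linarith
  have hαβ : 0 < -(α*β) := by nlinarith
  have hαδ : 0 < -(α*δ) := by nlinarith
  have hγδ : 0 < γ*δ := mul_pos_of_neg_of_neg γ0 δ0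
  have hβγ : 0 < β*γ := mul_pos_of_neg_of_neg β0 γ0
  have hprod : 0 < -(α*β*γ*δ) := by nlinarith [mul_pos hαβ hγδ]
  -- `-β < -γ` and `α < -δ`, respectively `α < -β` and `-δ < -γ`
  have h1 : 0 < α*β + γ*δ := by
    have : -β * α < -γ * -δ :=
      mul_lt_mul'' (by linarith) (by linarith) (by linarith) α0.le
    linarith
  have h2 : 0 < α*δ + β*γ := by
    have : α * -δ < -β * -γ :=
      mul_lt_mul'' (by linarith) (by linarith) α0.le (by linarith)
    linarith
  have ha : 0 ≤ a^2 := sq_nonneg a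
  have hb : 0 ≤ b^2 := sq_nonneg b
  have hab' : 0 < a^2 ∨ 0 < b^2 := by
    by_contra! h
    exact hab (by linarith)
  have hm : 0 < γ*δ - α*β := by linarith
  have hn : 0 < β*γ - α*δ := by linarith
  have hS : 0 < a^2 * (γ*δ - α*β) + b^2 * (β*γ - α*δ) := by
    rcases hab' with h | h <;> positivity
  have hD : 0 < -(α*β*γ*δ) * (a^2 - b^2)^2 := by
    have : a^2 - b^2 ≠ 0 := sub_ne_zero.mpr hab
    positivity
  have hdisc : 0 < (a^2 * (γ*δ - α*β) + b^2 * (β*γ - α*δ))^2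
      - 4 * (-(α*β*γ*δ) * (a^2 - b^2)^2) := by
    have e : (a^2 * (γ*δ - α*β) + b^2 * (β*γ - α*δ))^2
        - 4 * (-(α*β*γ*δ) * (a^2 - b^2)^2)
        = (a^2)^2 * (α*β + γ*δ)^2 + (b^2)^2 * (α*δ + β*γ)^2
          + a^2 * b^2 * (2 * ((γ*δ - α*β) * (β*γ - α*δ)) + 8 * -(α*β*γ*δ)) := by ring
    rw [e]
    rcases hab' with h | h <;> positivity
  obtain ⟨A, B, hA, hB, hAB, hsum, hmul⟩ := exists_frequencies _ _ hS hD hdisc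
  refine ⟨A, B, hA, hB, hAB, ?_⟩
  have hmap : (JacG l1 l2 l3 l4 ![0, 0, a, 0, 0, b]).map Complex.ofReal
      = (sparseJac α β γ δ a b).map Complex.ofRealHom := by
    rw [JacG_eq]; rfl
  have hI : (C Complex.I : ℂ[X])^2 = -1 := by
    rw [← C_pow, Complex.I_sq, C_neg, C_1]
  rw [hmap, Matrix.charpoly_map, charpoly_sparse_s17, ← hsum, ← hmul]
  simp only [Polynomial.map_mul, Polynomial.map_add, Polynomial.map_pow, map_X, map_C,
    Complex.ofRealHom_eq_coe,
    C_mul, C_add, C_pow]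
  linear_combination (-(X^2 * (X^2 * ((C (A:ℂ))^2 + (C (B:ℂ))^2)))
    - X^2 * (C (A:ℂ))^2 * (C (B:ℂ))^2 * (1 - (C Complex.I)^2)) * (-1) * hI
end
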